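/- Under the multigrid setting — levels 0, …, ℓ with dimensions N_0, …, N_ℓ; monolithic level operators C_i with invertible blocks C_{i,j}; monolithic preconditioners W_i with invertible blocks W_{i,j}; smoothers S_i = I − W_i⁻¹ C_i with blocks S_{i,j} = I − W_{i,j}⁻¹ C_{i,j}; prolongations 𝐏_i = I_s ⊗ P_i and restrictions 𝐑_i = I_s ⊗ R_i; and the recursively defined iteration matrices T_0 = 0, T_i = S_i^{ν_1} ( I − 𝐏_i (I − T_{i−1}^γ) C_{i−1}⁻¹ 𝐑_i C_i ) S_i^{ν_2} together with the per-stage iteration matrices T_{0,j} = 0, T_{i,j} = S_{i,j}^{ν_1} ( I − P_i (I − T_{i−1,j}^γ) C_{i−1,j}⁻¹ R_i C_{i,j} ) S_{i,j}^{ν_2} — the spectral radius of the monolithic multigrid iteration on the finest level satisfies ρ(T_ℓ) = max_{1 ≤ j ≤ s} ρ(T_{ℓ,j}); in particular, ρ(T_ℓ) < 1 if and only if ρ(T_{ℓ,j}) < 1 for every characteristic stage j, i.e. the monolithic multigrid method converges if and only if the underlying multigrid method converges for each characteristic stage. -/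

import Mathlib

open Matrix Kronecker

/-- Block-diagonal matrix indexed by `Fin s × Fin N` whose `i`-th diagonal block is `Y i`. -/
def blockDiagFst {m n : ℕ} (Y : Fin m → Matrix (Fin n) (Fin n) ℂ) :
    Matrix (Fin m × Fin n) (Fin m × Fin n) ℂ :=
  Matrix.of fun p q => if p.1 = q.1 then Y p.1 p.2 q.2 else 0

/-- Rectangular block-diagonal matrices. -/
def bdRect {s m n : ℕ} (Y : Fin s → Matrix (Fin m) (Fin n) ℂ) :
    Matrix (Fin s × Fin m) (Fin s × Fin n) ℂ :=
  Matrix.of fun p q => if p.1 = q.1 then Y p.1 p.2 q.2 else 0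

/-- `Y` is block-diagonalized by `X`, with (rectangular) blocks `Yb`. -/
def MonoRel {s m n : ℕ} (X : Matrix (Fin s) (Fin s) ℂ)
    (Y : Matrix (Fin s × Fin m) (Fin s × Fin n) ℂ)
    (Yb : Fin s → Matrix (Fin m) (Fin n) ℂ) : Prop :=
  (X⁻¹ ⊗ₖ (1 : Matrix (Fin m) (Fin m) ℂ)) * Y * (X ⊗ₖ (1 : Matrix (Fin n) (Fin n) ℂ)) = bdRect Yb

theorem bdRect_mul {s m n k : ℕ} (Y : Fin s → Matrix (Fin m) (Fin n) ℂ)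
    (Z : Fin s → Matrix (Fin n) (Fin k) ℂ) :
    bdRect Y * bdRect Z = bdRect (fun j => Y j * Z j) := by
  ext ⟨a, b⟩ ⟨c, d⟩
  simp only [bdRect, Matrix.mul_apply, Matrix.of_apply, Fintype.sum_prod_type]
  rw [Finset.sum_eq_single a]
  · by_cases h : a = c
    · simp [h]
    · simp [h]
  · intro x _ hx
    simp [Ne.symm hx]
  · simp

theorem bdRect_one {s m : ℕ} :
    bdRect (fun _ : Fin s => (1 : Matrix (Fin m) (Fin m) ℂ)) = 1 := by
  ext ⟨a, b⟩ ⟨c, d⟩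
  by_cases h : a = c <;> by_cases h' : b = d <;> simp [bdRect, Matrix.one_apply, h, h']

theorem bdRect_sub {s m n : ℕ} (Y Z : Fin s → Matrix (Fin m) (Fin n) ℂ) :
    bdRect Y - bdRect Z = bdRect (fun j => Y j - Z j) := by
  ext ⟨a, b⟩ ⟨c, d⟩
  by_cases h : a = c <;> simp [bdRect, h]

theorem bdRect_const {s m n : ℕ} (P : Matrix (Fin m) (Fin n) ℂ) :
    (1 : Matrix (Fin s) (Fin s) ℂ) ⊗ₖ P = bdRect (fun _ => P) := by
  ext ⟨a, b⟩ ⟨c, d⟩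
  by_cases h : a = c <;> simp [bdRect, h, Matrix.one_apply]

theorem bdRect_det {s m : ℕ} (Y : Fin s → Matrix (Fin m) (Fin m) ℂ) :
    (bdRect Y).det = ∏ j, (Y j).det := by
  rw [← Matrix.det_blockDiagonal, ← Matrix.det_submatrix_equiv_self (Equiv.prodComm (Fin m) (Fin s))]
  congr 1

theorem kron_cancel {s m : ℕ} {X : Matrix (Fin s) (Fin s) ℂ} (hX : IsUnit X.det) :
    (X ⊗ₖ (1 : Matrix (Fin m) (Fin m) ℂ)) * (X⁻¹ ⊗ₖ (1 : Matrix (Fin m) (Fin m) ℂ)) = 1 := by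
  rw [← Matrix.mul_kronecker_mul, Matrix.mul_nonsing_inv X hX]; simp

theorem kron_cancel' {s m : ℕ} {X : Matrix (Fin s) (Fin s) ℂ} (hX : IsUnit X.det) :
    (X⁻¹ ⊗ₖ (1 : Matrix (Fin m) (Fin m) ℂ)) * (X ⊗ₖ (1 : Matrix (Fin m) (Fin m) ℂ)) = 1 := by
  rw [← Matrix.mul_kronecker_mul, Matrix.nonsing_inv_mul X hX]; simp

theorem MonoRel.mul {s m n k : ℕ} {X : Matrix (Fin s) (Fin s) ℂ} (hX : IsUnit X.det)
    {Y : Matrix (Fin s × Fin m) (Fin s × Fin n) ℂ} {Yb : Fin s → Matrix (Fin m) (Fin n) ℂ}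
    {Z : Matrix (Fin s × Fin n) (Fin s × Fin k) ℂ} {Zb : Fin s → Matrix (Fin n) (Fin k) ℂ}
    (hY : MonoRel X Y Yb) (hZ : MonoRel X Z Zb) :
    MonoRel X (Y * Z) (fun j => Yb j * Zb j) := by
  unfold MonoRel at *
  rw [← bdRect_mul, ← hY, ← hZ]
  simp only [Matrix.mul_assoc]
  rw [← Matrix.mul_assoc (X ⊗ₖ (1 : Matrix (Fin n) (Fin n) ℂ)), kron_cancel hX, Matrix.one_mul]

theorem MonoRel.one {s m : ℕ} {X : Matrix (Fin s) (Fin s) ℂ} (hX : IsUnit X.det) :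
    MonoRel X 1 (fun _ => (1 : Matrix (Fin m) (Fin m) ℂ)) := by
  unfold MonoRel
  rw [Matrix.mul_one, kron_cancel' hX, bdRect_one]

theorem MonoRel.sub {s m n : ℕ} {X : Matrix (Fin s) (Fin s) ℂ}
    {Y Z : Matrix (Fin s × Fin m) (Fin s × Fin n) ℂ} {Yb Zb : Fin s → Matrix (Fin m) (Fin n) ℂ}
    (hY : MonoRel X Y Yb) (hZ : MonoRel X Z Zb) :
    MonoRel X (Y - Z) (fun j => Yb j - Zb j) := by
  unfold MonoRel at *
  rw [← bdRect_sub, ← hY, ← hZ, Matrix.mul_sub, Matrix.sub_mul]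

theorem MonoRel.pow {s m : ℕ} {X : Matrix (Fin s) (Fin s) ℂ} (hX : IsUnit X.det)
    {Y : Matrix (Fin s × Fin m) (Fin s × Fin m) ℂ} {Yb : Fin s → Matrix (Fin m) (Fin m) ℂ}
    (hY : MonoRel X Y Yb) (r : ℕ) : MonoRel X (Y ^ r) (fun j => Yb j ^ r) := by
  induction r with
  | zero => simpa using MonoRel.one hX
  | succ r ih => simpa [pow_succ] using ih.mul hX hY

theorem MonoRel.kron {s m n : ℕ} {X : Matrix (Fin s) (Fin s) ℂ} (hX : IsUnit X.det)
    (P : Matrix (Fin m) (Fin n) ℂ) :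
    MonoRel X ((1 : Matrix (Fin s) (Fin s) ℂ) ⊗ₖ P) (fun _ => P) := by
  unfold MonoRel
  rw [← Matrix.mul_kronecker_mul, ← Matrix.mul_kronecker_mul, ← bdRect_const]
  simp [Matrix.nonsing_inv_mul X hX]

theorem MonoRel.inj {s m n : ℕ} {X : Matrix (Fin s) (Fin s) ℂ} (hX : IsUnit X.det)
    {Y Z : Matrix (Fin s × Fin m) (Fin s × Fin n) ℂ} {Yb : Fin s → Matrix (Fin m) (Fin n) ℂ}
    (hY : MonoRel X Y Yb) (hZ : MonoRel X Z Yb) : Y = Z := by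
  have key : ∀ Y : Matrix (Fin s × Fin m) (Fin s × Fin n) ℂ,
      (X ⊗ₖ (1 : Matrix (Fin m) (Fin m) ℂ)) * ((X⁻¹ ⊗ₖ (1 : Matrix (Fin m) (Fin m) ℂ)) * Y *
        (X ⊗ₖ (1 : Matrix (Fin n) (Fin n) ℂ))) * (X⁻¹ ⊗ₖ (1 : Matrix (Fin n) (Fin n) ℂ)) = Y := by
    intro Y
    simp only [Matrix.mul_assoc]
    rw [kron_cancel hX, Matrix.mul_one, ← Matrix.mul_assoc, kron_cancel hX, Matrix.one_mul]
  unfold MonoRel at *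
  rw [← key Y, ← key Z, hY, hZ]

theorem MonoRel.exists {s m : ℕ} {X : Matrix (Fin s) (Fin s) ℂ} (hX : IsUnit X.det)
    (Yb : Fin s → Matrix (Fin m) (Fin m) ℂ) : ∃ Y, MonoRel X Y Yb := by
  refine ⟨(X ⊗ₖ (1 : Matrix (Fin m) (Fin m) ℂ)) * bdRect Yb *
    (X⁻¹ ⊗ₖ (1 : Matrix (Fin m) (Fin m) ℂ)), ?_⟩
  unfold MonoRel
  simp only [Matrix.mul_assoc]
  rw [kron_cancel' hX, Matrix.mul_one, ← Matrix.mul_assoc, kron_cancel' hX, Matrix.one_mul]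

theorem MonoRel.inv {s m : ℕ} {X : Matrix (Fin s) (Fin s) ℂ} (hX : IsUnit X.det)
    {Y : Matrix (Fin s × Fin m) (Fin s × Fin m) ℂ} {Yb : Fin s → Matrix (Fin m) (Fin m) ℂ}
    (hY : MonoRel X Y Yb) (hb : ∀ j, IsUnit (Yb j).det) :
    MonoRel X Y⁻¹ (fun j => (Yb j)⁻¹) := by
  obtain ⟨Z, hZ⟩ := MonoRel.exists hX (fun j => (Yb j)⁻¹)
  have h := hY.mul hX hZ
  have e : (fun j => Yb j * (Yb j)⁻¹) = fun _ => 1 := by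
    funext j; exact Matrix.mul_nonsing_inv _ (hb j)
  rw [e] at h
  have h1 : Y * Z = 1 := h.inj hX (MonoRel.one hX)
  rw [Matrix.inv_eq_right_inv h1]
  exact hZ

theorem MonoRel.det_eq {s m : ℕ} {X : Matrix (Fin s) (Fin s) ℂ} (hX : IsUnit X.det)
    {Y : Matrix (Fin s × Fin m) (Fin s × Fin m) ℂ} {Yb : Fin s → Matrix (Fin m) (Fin m) ℂ}
    (hY : MonoRel X Y Yb) : Y.det = ∏ j, (Yb j).det := by
  unfold MonoRel at hY
  rw [← bdRect_det, ← hY, Matrix.det_mul, Matrix.det_mul]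
  have := congrArg Matrix.det (kron_cancel (m := m) hX)
  rw [Matrix.det_mul, Matrix.det_one] at this
  linear_combination (-Y.det) * this

theorem MonoRel.smul_one {s m : ℕ} {X : Matrix (Fin s) (Fin s) ℂ} (hX : IsUnit X.det) (z : ℂ) :
    MonoRel X (algebraMap ℂ _ z) (fun _ => (algebraMap ℂ (Matrix (Fin m) (Fin m) ℂ) z)) := by
  have h := MonoRel.one (m := m) hX
  unfold MonoRel at *
  simp only [Algebra.algebraMap_eq_smul_one]
  rw [Matrix.mul_smul, Matrix.smul_mul, h]
  ext ⟨a, b⟩ ⟨c, d⟩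
  by_cases h : a = c <;> simp [bdRect, h]

theorem MonoRel.spectrum_eq {s m : ℕ} {X : Matrix (Fin s) (Fin s) ℂ} (hX : IsUnit X.det)
    {Y : Matrix (Fin s × Fin m) (Fin s × Fin m) ℂ} {Yb : Fin s → Matrix (Fin m) (Fin m) ℂ}
    (hY : MonoRel X Y Yb) : spectrum ℂ Y = ⋃ j, spectrum ℂ (Yb j) := by
  ext z
  have h := ((MonoRel.smul_one hX z).sub hY).det_eq hX
  simp only [Set.mem_iUnion, spectrum.mem_iff, Matrix.isUnit_iff_isUnit_det, isUnit_iff_ne_zero, h]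
  simp [Finset.prod_eq_zero_iff]

theorem stmt16 (s : ℕ) (hs : 0 < s)
    (X : Matrix (Fin s) (Fin s) ℂ) (hX : IsUnit X.det)
    (ℓ : ℕ) (Nl : ℕ → ℕ) (hNl : ∀ i, i ≤ ℓ → 0 < Nl i)
    -- monolithic level operators with invertible blocks
    (C : (i : ℕ) → Matrix (Fin s × Fin (Nl i)) (Fin s × Fin (Nl i)) ℂ)
    (Cb : (i : ℕ) → Fin s → Matrix (Fin (Nl i)) (Fin (Nl i)) ℂ)
    (hC : ∀ i, i ≤ ℓ →
      (X⁻¹ ⊗ₖ (1 : Matrix (Fin (Nl i)) (Fin (Nl i)) ℂ)) * C i *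
        (X ⊗ₖ (1 : Matrix (Fin (Nl i)) (Fin (Nl i)) ℂ)) = blockDiagFst (Cb i))
    (hCb : ∀ i, i ≤ ℓ → ∀ j, IsUnit ((Cb i j).det))
    -- monolithic preconditioners (smoothers) with invertible blocks, on levels 1,…,ℓ
    (W : (i : ℕ) → Matrix (Fin s × Fin (Nl i)) (Fin s × Fin (Nl i)) ℂ)
    (Wb : (i : ℕ) → Fin s → Matrix (Fin (Nl i)) (Fin (Nl i)) ℂ)
    (hW : ∀ i, 1 ≤ i → i ≤ ℓ →
      (X⁻¹ ⊗ₖ (1 : Matrix (Fin (Nl i)) (Fin (Nl i)) ℂ)) * W i *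
        (X ⊗ₖ (1 : Matrix (Fin (Nl i)) (Fin (Nl i)) ℂ)) = blockDiagFst (Wb i))
    (hWb : ∀ i, 1 ≤ i → i ≤ ℓ → ∀ j, IsUnit ((Wb i j).det))
    -- prolongations and restrictions between consecutive levels
    (P : (i : ℕ) → Matrix (Fin (Nl (i + 1))) (Fin (Nl i)) ℂ)
    (R : (i : ℕ) → Matrix (Fin (Nl i)) (Fin (Nl (i + 1))) ℂ)
    (ν₁ ν₂ γ : ℕ)
    -- the stage-coupled multigrid iteration matrices, with smoother Sᵢ = I − Wᵢ⁻¹ Cᵢ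
    (T : (i : ℕ) → Matrix (Fin s × Fin (Nl i)) (Fin s × Fin (Nl i)) ℂ)
    (hT0 : T 0 = 0)
    (hTrec : ∀ i, i < ℓ →
      T (i + 1) =
        (1 - (W (i + 1))⁻¹ * C (i + 1)) ^ ν₁ *
          (1 - ((1 : Matrix (Fin s) (Fin s) ℂ) ⊗ₖ P i) * (1 - T i ^ γ) * (C i)⁻¹ *
            ((1 : Matrix (Fin s) (Fin s) ℂ) ⊗ₖ R i) * C (i + 1)) *
          (1 - (W (i + 1))⁻¹ * C (i + 1)) ^ ν₂)
    -- the per-stage multigrid iteration matrices, with smoother blocks I − Wᵢⱼ⁻¹ Cᵢⱼ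
    (Tb : (i : ℕ) → Fin s → Matrix (Fin (Nl i)) (Fin (Nl i)) ℂ)
    (hTb0 : ∀ j, Tb 0 j = 0)
    (hTbrec : ∀ i, i < ℓ → ∀ j,
      Tb (i + 1) j =
        (1 - (Wb (i + 1) j)⁻¹ * Cb (i + 1) j) ^ ν₁ *
          (1 - P i * (1 - Tb i j ^ γ) * (Cb i j)⁻¹ * R i * Cb (i + 1) j) *
          (1 - (Wb (i + 1) j)⁻¹ * Cb (i + 1) j) ^ ν₂) :
    (spectralRadius ℂ (T ℓ) = ⨆ j : Fin s, spectralRadius ℂ (Tb ℓ j)) ∧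
    (spectralRadius ℂ (T ℓ) < 1 ↔ ∀ j : Fin s, spectralRadius ℂ (Tb ℓ j) < 1) := by
  have key : ∀ i, i ≤ ℓ → MonoRel X (T i) (Tb i) := by
    intro i
    induction i with
    | zero =>
      intro _
      have : Tb 0 = fun _ => 0 := funext hTb0
      rw [hT0, this]
      have h := (MonoRel.one (m := Nl 0) hX).sub (MonoRel.one hX)
      simpa using h
    | succ i ih =>
      intro hi
      have hi' : i ≤ ℓ := by omega
      have hTi := ih hi'
      have hCi : MonoRel X (C i) (Cb i) := hC i hi'
      have hCs : MonoRel X (C (i + 1)) (Cb (i + 1)) := hC (i + 1) hi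
      have hWs : MonoRel X (W (i + 1)) (Wb (i + 1)) := hW (i + 1) (by omega) hi
      have hS := (MonoRel.one hX).sub
        ((hWs.inv hX (hWb (i + 1) (by omega) hi)).mul hX hCs)
      have hG := (MonoRel.one hX).sub
        (((((MonoRel.kron hX (P i)).mul hX ((MonoRel.one hX).sub (hTi.pow hX γ))).mul hX
          (hCi.inv hX (hCb i hi'))).mul hX (MonoRel.kron hX (R i))).mul hX hCs)
      have e : Tb (i + 1) = _ := funext (hTbrec i (by omega))
      rw [hTrec i (by omega), e]
      exact ((hS.pow hX ν₁).mul hX hG).mul hX (hS.pow hX ν₂)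
  have main : spectralRadius ℂ (T ℓ) = ⨆ j : Fin s, spectralRadius ℂ (Tb ℓ j) := by
    unfold spectralRadius
    rw [(key ℓ le_rfl).spectrum_eq hX, iSup_iUnion]
  refine ⟨main, ?_⟩
  rw [main]
  constructor
  · intro h j
    exact lt_of_le_of_lt (le_iSup (fun j => spectralRadius ℂ (Tb ℓ j)) j) h
  · intro h
    haveI : Nonempty (Fin s) := ⟨⟨0, hs⟩⟩
    obtain ⟨j, hj⟩ := exists_eq_ciSup_of_finite (f := fun j => spectralRadius ℂ (Tb ℓ j))
    rw [← hj]
    exact h j
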